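/- arXiv:2503.24217 — 2 statements merged into one kernel-verified Lean document; each statement's English description precedes it below -/
import Mathlib

section
/- If G is a finite non-abelian group, then 0 is a character value of G, i.e. there exist an irreducible complex character χ of G and an element g ∈ G with χ(g) = 0. -/
open CategoryTheory
def cv (G : Type) [Monoid G] : Set ℂ :=
  {z | ∃ V : FDRep ℂ G, Simple V ∧ ∃ g : G, V.character g = z}

/-!
The first orthogonality relation says that the average of `|χ(g)|²` over `G` is `1` for every
irreducible character `χ`. If `χ(1) > 1`, the average over `g ≠ 1` is therefore less than `1`, and
by the inequality of arithmetic and geometric means `∏_{g ≠ 1} χ(g)` has absolute value less than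
`1`. The Galois group of the cyclotomic field of order `|G|` acts on character values by
`χ(g) ↦ χ(g ^ k)` with `k` coprime to `|G|`, so it permutes the factors of this product, which is
consequently a rational algebraic integer, that is, an integer. Being of absolute value less than
`1`, it vanishes.

An irreducible character of degree greater than `1` exists for non-abelian `G`: the group algebra is
semisimple, so some simple module tells `a * b` and `b * a` apart.
-/

open Module Representation
open scoped MonoidAlgebra

section Eigenvalues

theorem commute_of_finrank_le_one {R M : Type*} [CommRing R] [StrongRankCondition R]
    [AddCommGroup M] [Module R M] [Module.Free R M] [Module.Finite R M] (hM : finrank R M ≤ 1)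
    (f g : End R M) : Commute f g := by
  obtain ⟨v, hv⟩ := finrank_le_one_iff.1 hM
  have exists_eq_smul (f : End R M) : ∃ c : R, ∀ w, f w = c • w := by
    obtain ⟨c, hc⟩ := hv (f v)
    refine ⟨c, fun w ↦ ?_⟩
    obtain ⟨d, rfl⟩ := hv w
    rw [map_smul, ← hc, smul_comm]
  obtain ⟨c, hc⟩ := exists_eq_smul f
  obtain ⟨d, hd⟩ := exists_eq_smul g
  ext w
  simp only [End.mul_apply, hc, hd, smul_comm c d]

theorem trace_eq_sum_of_apply_basis_eq_smul {R M ι : Type*} [CommRing R] [AddCommGroup M]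
    [Module R M] [Fintype ι] (b : Basis ι R M) {f : End R M} {μ : ι → R}
    (hb : ∀ i, f (b i) = μ i • b i) : LinearMap.trace R M f = ∑ i, μ i := by
  classical
  rw [LinearMap.trace_eq_matrix_trace R b, Matrix.trace]
  simp [LinearMap.toMatrix_apply, hb]

variable {K V : Type*} [Field K] [AddCommGroup V] [Module K V] [FiniteDimensional K V]

theorem exists_basis_hasEigenvector_of_iSup_eigenspace_eq_top {f : End K V}
    (hf : ⨆ μ, f.eigenspace μ = ⊤) :
    ∃ (b : Basis (Fin (finrank K V)) K V) (μ : Fin (finrank K V) → K),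
      ∀ i, f.HasEigenvector (μ i) (b i) := by
  classical
  have decomposition :=
    DirectSum.isInternal_submodule_of_iSupIndep_of_iSup_eq_top f.eigenspaces_iSupIndep hf
  let c := decomposition.collectedBasis fun μ ↦ finBasis K (f.eigenspace μ)
  have : Fintype ((μ : K) × Fin (finrank K (f.eigenspace μ))) :=
    FiniteDimensional.fintypeBasisIndex c
  let e := Fintype.equivFinOfCardEq (finrank_eq_card_basis c).symm
  refine ⟨c.reindex e, fun i ↦ (e.symm i).1, fun i ↦ ⟨?_, (c.reindex e).ne_zero i⟩⟩
  rw [c.reindex_apply]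
  exact decomposition.collectedBasis_mem _ _

theorem exists_trace_pow_eq_sum_pow_of_pow_eq_one [IsAlgClosed K] {f : End K V} {m : ℕ}
    (hm : (m : K) ≠ 0) (hf : f ^ m = 1) :
    ∃ μ : Fin (finrank K V) → K,
      (∀ i, μ i ^ m = 1) ∧ ∀ k, LinearMap.trace K V (f ^ k) = ∑ i, μ i ^ k := by
  have semisimple : f.IsSemisimple :=
    End.isSemisimple_of_squarefree_aeval_eq_zero
      (Polynomial.separable_X_pow_sub_C 1 hm one_ne_zero).squarefree (by simp [hf])
  obtain ⟨b, μ, hb⟩ :=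
    exists_basis_hasEigenvector_of_iSup_eigenspace_eq_top semisimple.iSup_eigenspace_eq_top
  refine ⟨μ, fun i ↦ ?_, fun k ↦ trace_eq_sum_of_apply_basis_eq_smul b fun i ↦ (hb i).pow_apply k⟩
  have smul_eq : μ i ^ m • b i = (1 : K) • b i := by
    rw [← (hb i).pow_apply, hf, End.one_apply, one_smul]
  exact smul_left_injective K (b.ne_zero i) smul_eq

end Eigenvalues

section Integrality

variable {G L V : Type*} [Group G] [Field L] [IsAlgClosed L] [AddCommGroup V] [Module L V]
  [FiniteDimensional L V]

theorem exists_character_pow_eq_sum_pow [Finite G] [NeZero (Nat.card G : L)]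
    (ρ : Representation L G V) (g : G) :
    ∃ μ : Fin (finrank L V) → L,
      (∀ i, μ i ^ Nat.card G = 1) ∧ ∀ k, ρ.character (g ^ k) = ∑ i, μ i ^ k := by
  simp only [Representation.character, map_pow]
  exact exists_trace_pow_eq_sum_pow_of_pow_eq_one (NeZero.ne _)
    (by rw [← map_pow, pow_card_eq_one', map_one])

theorem exists_isIntegral_map_eq_character_pow [Finite G] [NeZero (Nat.card G : L)] {K : Type*}
    [Field K] {ζ : K} (hζ : IsPrimitiveRoot ζ (Nat.card G)) (φ : K →+* L)
    (ρ : Representation L G V) (g : G) :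
    ∃ x : K, IsIntegral ℤ x ∧
      ∀ (σ : K →+* L) (k : ℕ), σ ζ = φ ζ ^ k → σ x = ρ.character (g ^ k) := by
  have : NeZero (Nat.card G) := ⟨Nat.card_pos.ne'⟩
  obtain ⟨μ, hμ, character_pow⟩ := exists_character_pow_eq_sum_pow ρ g
  choose e _ he using fun i ↦ (hζ.map_of_injective φ.injective).eq_pow_of_pow_eq_one (hμ i)
  refine ⟨∑ i, ζ ^ e i,
    IsIntegral.sum _ fun i _ ↦ (hζ.isIntegral Nat.card_pos).pow (e i), fun σ k hσ ↦ ?_⟩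
  simp only [map_sum, map_pow, hσ, character_pow, ← he, pow_right_comm]

theorem prod_pow_of_coprime {G M : Type*} [Group G] [CommMonoid M] {s : Finset G} {k : ℕ}
    (hk : (Nat.card G).Coprime k) (hs : ∀ g ∈ s, g ^ k ∈ s) (f : G → M) :
    ∏ g ∈ s, f (g ^ k) = ∏ g ∈ s, f g := by
  have injOn : Set.InjOn (· ^ k) (s : Set G) := (powCoprime hk).injective.injOn
  exact Finset.prod_nbij (· ^ k) hs injOn
    (Finset.surjOn_of_injOn_of_card_le _ hs injOn le_rfl) fun _ _ ↦ rfl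

theorem exists_intCast_eq_prod_character [Finite G] [CharZero L] (ρ : Representation L G V)
    {s : Finset G} (hs : ∀ k, (Nat.card G).Coprime k → ∀ g ∈ s, g ^ k ∈ s) :
    ∃ n : ℤ, (n : L) = ∏ g ∈ s, ρ.character g := by
  have : NeZero (Nat.card G) := ⟨Nat.card_pos.ne'⟩
  let K := CyclotomicField (Nat.card G) ℚ
  have : IsCyclotomicExtension {Nat.card G} ℚ K := CyclotomicField.isCyclotomicExtension _ ℚ
  have : IsGalois ℚ K := IsCyclotomicExtension.isGalois {Nat.card G} ℚ K
  have hζ := IsCyclotomicExtension.zeta_spec (Nat.card G) ℚ K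
  let φ : K →+* L := (IsAlgClosed.lift : K →ₐ[ℚ] L)
  choose x x_integral map_x using exists_isIntegral_map_eq_character_pow hζ φ ρ
  have map_prod_x : φ (∏ g ∈ s, x g) = ∏ g ∈ s, ρ.character g := by
    rw [map_prod]
    exact Finset.prod_congr rfl fun g _ ↦ by simpa using map_x g φ 1 (pow_one _).symm
  have fixed (τ : Gal(K/ℚ)) : τ (∏ g ∈ s, x g) = ∏ g ∈ s, x g := by
    obtain ⟨k, -, hk, hτ⟩ := hζ.isPrimitiveRoot_iff.1 (hζ.map_of_injective τ.injective)
    apply φ.injective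
    calc
      φ (τ (∏ g ∈ s, x g)) = ∏ g ∈ s, ρ.character (g ^ k) := by
        rw [map_prod, map_prod]
        exact Finset.prod_congr rfl fun g _ ↦ map_x g (φ.comp τ) k (by simp [← hτ])
      _ = ∏ g ∈ s, ρ.character g := prod_pow_of_coprime hk.symm (hs k hk.symm) _
      _ = φ (∏ g ∈ s, x g) := map_prod_x.symm
  obtain ⟨q, hq⟩ := (IsGalois.mem_range_algebraMap_iff_fixed _).2 fixed
  have q_integral : IsIntegral ℤ q := by
    rw [← isIntegral_algebraMap_iff (algebraMap ℚ K).injective, hq]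
    exact IsIntegral.prod _ fun g _ ↦ x_integral g
  obtain ⟨n, rfl⟩ := IsIntegrallyClosed.isIntegral_iff.1 q_integral
  exact ⟨n, by rw [← map_prod_x, ← hq]; simp⟩

end Integrality

section Burnside

theorem prod_lt_one_of_sum_lt_card {ι : Type*} {s : Finset ι} {z : ι → ℝ} (hz : ∀ i ∈ s, 0 ≤ z i)
    (hsum : ∑ i ∈ s, z i < s.card) : ∏ i ∈ s, z i < 1 :=
  calc
    ∏ i ∈ s, z i ≤ ∏ i ∈ s, Real.exp (z i - 1) :=
      Finset.prod_le_prod hz fun i _ ↦ by linarith [Real.add_one_le_exp (z i - 1)]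
    _ = Real.exp (∑ i ∈ s, z i - s.card) := by
      rw [← Real.exp_sum, Finset.sum_sub_distrib, Finset.sum_const, nsmul_one]
    _ < 1 := Real.exp_lt_one_iff.2 (sub_neg.2 hsum)

theorem sum_character_mul_character_inv_of_isIrreducible {G k V : Type*} [Group G] [Fintype G]
    [Field k] [IsAlgClosed k] [NeZero (Nat.card G : k)] [AddCommGroup V] [Module k V]
    [FiniteDimensional k V] (ρ : Representation k G V) [ρ.IsIrreducible] :
    ∑ g, ρ.character g * ρ.character g⁻¹ = Nat.card G := by
  have := invertibleOfNonzero (NeZero.ne (Nat.card G : k))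
  have orthonormal := char_orthonormal ρ ρ
  rw [if_pos ⟨Representation.Equiv.refl ρ⟩, inv_mul_eq_one₀ (NeZero.ne _)] at orthonormal
  exact orthonormal.symm

variable {G V : Type*} [Group G] [AddCommGroup V] [Module ℂ V] [FiniteDimensional ℂ V]
  (ρ : Representation ℂ G V)

theorem character_inv_eq_conj [Finite G] (g : G) :
    ρ.character g⁻¹ = starRingEnd ℂ (ρ.character g) := by
  have card_ne_zero : Nat.card G ≠ 0 := Nat.card_pos.ne'
  obtain ⟨μ, hμ, character_pow⟩ := exists_character_pow_eq_sum_pow ρ g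
  have pow_eq_conj (i) : μ i ^ (Nat.card G - 1) = starRingEnd ℂ (μ i) := by
    rw [← Complex.inv_eq_conj (Complex.norm_eq_one_of_pow_eq_one (hμ i) card_ne_zero)]
    exact eq_inv_of_mul_eq_one_left (by rw [pow_sub_one_mul card_ne_zero, hμ])
  have inv_eq_pow : g⁻¹ = g ^ (Nat.card G - 1) :=
    inv_eq_of_mul_eq_one_left (by rw [pow_sub_one_mul card_ne_zero, pow_card_eq_one'])
  calc
    ρ.character g⁻¹ = ∑ i, starRingEnd ℂ (μ i) := by
      simp only [inv_eq_pow, character_pow, pow_eq_conj]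
    _ = starRingEnd ℂ (ρ.character (g ^ 1)) := by
      rw [character_pow, map_sum]
      simp only [pow_one]
    _ = starRingEnd ℂ (ρ.character g) := by rw [pow_one]

theorem sum_norm_sq_character_of_isIrreducible [Fintype G] [ρ.IsIrreducible] :
    ∑ g, ‖ρ.character g‖ ^ 2 = Nat.card G := by
  have := sum_character_mul_character_inv_of_isIrreducible ρ
  simp only [character_inv_eq_conj, Complex.mul_conj'] at this
  exact_mod_cast this

theorem norm_prod_erase_one_character_lt_one [Fintype G] [DecidableEq G] [ρ.IsIrreducible]
    (hV : 1 < finrank ℂ V) : ‖∏ g ∈ Finset.univ.erase 1, ρ.character g‖ < 1 := by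
  have one_lt_degree_sq : 1 < ‖ρ.character 1‖ ^ 2 := by
    rw [char_one, Complex.norm_natCast]
    exact one_lt_pow₀ (by exact_mod_cast hV) two_ne_zero
  have sum_eq : ‖ρ.character 1‖ ^ 2 + ∑ g ∈ Finset.univ.erase 1, ‖ρ.character g‖ ^ 2 =
      (Finset.univ.erase (1 : G)).card + 1 := by
    rw [Finset.add_sum_erase _ (fun g ↦ ‖ρ.character g‖ ^ 2) (Finset.mem_univ 1),
      sum_norm_sq_character_of_isIrreducible, Nat.card_eq_fintype_card, ← Finset.card_univ,
      ← Finset.card_erase_add_one (Finset.mem_univ 1), Nat.cast_succ]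
  have prod_sq_lt_one : ∏ g ∈ Finset.univ.erase 1, ‖ρ.character g‖ ^ 2 < 1 :=
    prod_lt_one_of_sum_lt_card (fun _ _ ↦ sq_nonneg _) (by linarith)
  rwa [Finset.prod_pow, ← norm_prod, sq_lt_one_iff₀ (norm_nonneg _)] at prod_sq_lt_one

theorem exists_character_eq_zero_of_one_lt_finrank [Finite G] [ρ.IsIrreducible]
    (hV : 1 < finrank ℂ V) : ∃ g, ρ.character g = 0 := by
  classical
  have := Fintype.ofFinite G
  have pow_mem_erase (k : ℕ) (hk : (Nat.card G).Coprime k) (g : G)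
      (hg : g ∈ Finset.univ.erase 1) : g ^ k ∈ Finset.univ.erase 1 := by
    rw [Finset.mem_erase] at hg ⊢
    refine ⟨fun pow_eq_one ↦ hg.1 ((powCoprime hk).injective ?_), Finset.mem_univ _⟩
    simpa only [powCoprime_apply, one_pow] using pow_eq_one
  obtain ⟨n, hn⟩ := exists_intCast_eq_prod_character ρ pow_mem_erase
  have n_eq_zero : n = 0 := by
    have norm_lt_one := norm_prod_erase_one_character_lt_one ρ hV
    rw [← hn, Complex.norm_intCast] at norm_lt_one
    exact Int.abs_lt_one_iff.1 (by exact_mod_cast norm_lt_one)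
  rw [n_eq_zero, Int.cast_zero, eq_comm, Finset.prod_eq_zero_iff] at hn
  obtain ⟨g, -, hg⟩ := hn
  exact ⟨g, hg⟩

end Burnside

section SimpleModules

theorem exists_isMaximal_notMem_of_jacobson_eq_bot {A : Type*} [Ring A]
    (hA : Ring.jacobson A = ⊥) {a : A} (ha : a ≠ 0) : ∃ I : Ideal A, I.IsMaximal ∧ a ∉ I := by
  contrapose! ha
  have mem_jacobson : a ∈ Ring.jacobson A :=
    Ideal.mem_sInf.2 fun {I} hI ↦ ha I (Ideal.isMaximal_def.2 hI)
  rwa [hA] at mem_jacobson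

theorem isIrreducible_ofModule' {k G : Type*} [Field k] [Monoid G] (M : Type*) [AddCommGroup M]
    [Module k M] [Module k[G] M] [IsScalarTower k k[G] M] [IsSimpleModule k[G] M] :
    (ofModule' (k := k) (G := G) M).IsIrreducible := by
  let ρ : Representation k G M := ofModule' M
  have asAlgebraHom_eq : ρ.asAlgebraHom = Algebra.lsmul k k M :=
    (MonoidAlgebra.lift k (M →ₗ[k] M) G).apply_symm_apply _
  let e : ρ.asModule ≃ₗ[k[G]] M :=
    { ρ.asModuleEquiv with
      map_smul' a x := (ρ.asModuleEquiv_map_smul a x).trans (by rw [asAlgebraHom_eq]; rfl) }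
  exact (irreducible_iff_isSimpleModule_asModule ρ).2 (IsSimpleModule.congr e)

theorem exists_isMaximal_ofModule'_apply_ne {k G : Type*} [Field k] [Group G] [Finite G]
    [NeZero (Nat.card G : k)] {g h : G} (hgh : g ≠ h) :
    ∃ I : Ideal k[G], I.IsMaximal ∧
      ofModule' (k := k) (k[G] ⧸ I) g ≠ ofModule' (k := k) (k[G] ⧸ I) h := by
  have of_sub_of_ne_zero : MonoidAlgebra.of k G g - MonoidAlgebra.of k G h ≠ 0 :=
    sub_ne_zero.2 (MonoidAlgebra.of_injective.ne hgh)
  obtain ⟨I, hI, notMem⟩ := exists_isMaximal_notMem_of_jacobson_eq_bot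
    (IsSemisimpleRing.jacobson_eq_bot k[G]) of_sub_of_ne_zero
  refine ⟨I, hI, fun apply_eq ↦ notMem ?_⟩
  have mk_eq : (Submodule.Quotient.mk (MonoidAlgebra.of k G g • 1) : k[G] ⧸ I) =
      Submodule.Quotient.mk (MonoidAlgebra.of k G h • 1) :=
    DFunLike.congr_fun apply_eq (Submodule.Quotient.mk 1)
  simpa only [smul_eq_mul, mul_one] using (Submodule.Quotient.eq I).1 mk_eq

universe u

theorem simple_fdRep_of_isIrreducible {k G V : Type u} [Field k] [IsAlgClosed k] [Group G]
    [Finite G] [NeZero (Nat.card G : k)] [AddCommGroup V] [Module k V] [FiniteDimensional k V]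
    (ρ : Representation k G V) [ρ.IsIrreducible] : Simple (FDRep.of ρ) := by
  rw [FDRep.simple_iff_end_is_rank_one,
    ← (linHom.invariantsEquivFDRepHom (FDRep.of ρ) (FDRep.of ρ)).finrank_eq]
  exact (invariantsEquivIntertwiningMap ρ ρ).finrank_eq.trans
    (IsIrreducible.finrank_intertwiningMap_self ρ)

end SimpleModules

theorem zero_mem_cv_of_nonabelian (G : Type) [Group G] [Fintype G]
    (h : ¬ ∀ a b : G, a * b = b * a) :
    (0 : ℂ) ∈ cv G := by
  push Not at h
  obtain ⟨a, b, hab⟩ := h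
  obtain ⟨I, hI, apply_ne⟩ := exists_isMaximal_ofModule'_apply_ne (k := ℂ) hab
  have : IsSimpleModule ℂ[G] (ℂ[G] ⧸ I) :=
    isSimpleModule_iff_isCoatom.2 (Ideal.isMaximal_def.1 hI)
  let ρ : Representation ℂ G (ℂ[G] ⧸ I) := ofModule' _
  have : ρ.IsIrreducible := isIrreducible_ofModule' _
  have one_lt_finrank : 1 < finrank ℂ (ℂ[G] ⧸ I) := by
    contrapose! apply_ne
    rw [map_mul, map_mul]
    exact commute_of_finrank_le_one apply_ne (ρ a) (ρ b)
  obtain ⟨g, hg⟩ := exists_character_eq_zero_of_one_lt_finrank ρ one_lt_finrank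
  exact ⟨FDRep.of ρ, simple_fdRep_of_isIrreducible ρ, g, hg⟩
end

section
/- Let G be a finite 2-group with exactly two character degrees cd(G) = {1, m} and suppose every non-linear irreducible character χ of G has |cv(χ)| ≤ 3 (so cv(χ) = {χ(1), −χ(1)·c, 0} type values restricted to {m, −1-related values}; concretely cv(G) = {1, m, −1, −m, 0}). Then there exists a normal subgroup N of G such that G/N is an extraspecial 2-group. -/
open CategoryTheory
def cd (G : Type) [Monoid G] : Set ℂ :=
  {z | ∃ V : FDRep ℂ G, Simple V ∧ V.character 1 = z}

/-!
Choose `N` maximal among the normal subgroups of `G` with non-abelian quotient `Q = G ⧸ N`; then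
`Q'` lies in every non-trivial normal subgroup of `Q`. The character values of `Q` are among those
of `G`, hence real. By Schur's lemma a central element `z` of `Q` acts on an irreducible
representation by a root of unity `c`, and `c` is real because `c` times the degree is a character
value; so `c = ±1`, and `z ^ 2 = 1` since irreducible representations separate the elements of `Q`.
Therefore each non-trivial central `z` generates a normal subgroup of order two containing `Q'`,
which forces `Q' = ⟨z⟩ = Z(Q)`.
-/

open Representation (IsIrreducible IntertwiningMap)
open scoped MonoidAlgebra ComplexConjugate

universe u v w

section Irreducible

variable {k : Type u} [Field k] {G : Type v} [Monoid G]

theorem fdRep_mono_iff_injective {V W : FDRep k G} (f : V ⟶ W) :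
    Mono f ↔ Function.Injective f :=
  ⟨fun _ ↦ (Rep.mono_iff_injective ((forget₂ (FDRep k G) (Rep k G)).map f)).1 inferInstance,
    ConcreteCategory.mono_of_injective f⟩

theorem simple_of_isIrreducible (V : FDRep k G) [IsIrreducible V.ρ] : Simple V where
  mono_isIso_iff_nonzero {W} f hf := by
    have hinj := (fdRep_mono_iff_injective f).1 hf
    rw [ConcreteCategory.isIso_iff_bijective, Function.Bijective, and_iff_right hinj]
    refine ⟨?_, fun hne ↦ ?_⟩
    · rintro hsurj rfl
      refine bot_ne_top (α := Subrepresentation V.ρ) (SetLike.ext fun x ↦ ?_)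
      obtain ⟨y, rfl⟩ := hsurj x
      exact iff_of_true (zero_mem (⊥ : Submodule k V)) Submodule.mem_top
    · let φ : IntertwiningMap W.ρ V.ρ := ((forget₂ (FDRep k G) (Rep k G)).map f).hom
      refine (IsIrreducible.surjective_or_eq_zero φ).resolve_right fun hφ ↦ hne ?_
      ext x
      exact DFunLike.congr_fun hφ x

theorem isIrreducible_of_simple (V : FDRep k G) [Simple V] : IsIrreducible V.ρ where
  exists_pair_ne := by
    refine ⟨⊥, ⊤, fun h ↦ id_nonzero V ?_⟩
    ext x
    exact (h ▸ Submodule.mem_top : x ∈ (⊥ : Subrepresentation V.ρ))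
  eq_bot_or_eq_top σ := by
    let ι : FDRep.of σ.toRepresentation ⟶ V :=
      FDRep.forget₂HomLinearEquiv _ _ (Rep.ofHom ⟨σ.toSubmodule.subtype, fun _ ↦ rfl⟩)
    have : Mono ι := (fdRep_mono_iff_injective ι).2 Subtype.val_injective
    by_cases hι : ι = 0
    · refine .inl (eq_bot_iff.2 fun x hx ↦ ?_)
      exact ConcreteCategory.congr_hom hι ⟨x, hx⟩
    · have hiso : IsIso ι := isIso_of_mono_of_nonzero hι
      refine .inr (eq_top_iff.2 fun x _ ↦ ?_)
      obtain ⟨y, rfl⟩ := ((ConcreteCategory.isIso_iff_bijective ι).1 hiso).2 x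
      exact y.2

variable {V : Type w} [AddCommGroup V] [Module k V]

theorem isIrreducible_comp_of_surjective {H : Type*} [Monoid H] (ρ : Representation k G V)
    [IsIrreducible ρ] {p : H →* G} (hp : Function.Surjective p) :
    IsIrreducible (ρ.comp p : Representation k H V) :=
  let e : Subrepresentation (ρ.comp p : Representation k H V) ≃o Subrepresentation ρ :=
    { toFun σ := ⟨σ.toSubmodule, hp.forall.2 σ.apply_mem_toSubmodule⟩
      invFun σ := ⟨σ.toSubmodule, fun h ↦ σ.apply_mem_toSubmodule (p h)⟩
      map_rel_iff' := Iff.rfl }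
  e.isSimpleOrder

theorem nontrivial_of_isIrreducible (ρ : Representation k G V) [IsIrreducible ρ] : Nontrivial V :=
  (IsSimpleModule.nontrivial k[G] ρ.asModule : Nontrivial ρ.asModule)

theorem exists_eq_smul_one_of_mem_center [IsAlgClosed k] [FiniteDimensional k V]
    (ρ : Representation k G V) [IsIrreducible ρ] {z : G} (hz : z ∈ Submonoid.center G) :
    ∃ c : k, ρ z = c • 1 := by
  obtain ⟨c, hc⟩ := IsIrreducible.algebraMap_intertwiningMap_bijective_of_isAlgClosed.surjective
    (IntertwiningMap.centralMul ρ z hz)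
  exact ⟨c, congrArg IntertwiningMap.toLinearMap hc.symm⟩

end Irreducible

theorem exists_isSimpleModule_smul_ne_zero_of_notMem_jacobson {R : Type u} [Ring R]
    {r : R} (hr : r ∉ Ring.jacobson R) :
    ∃ (M : Type u) (_ : AddCommGroup M) (_ : Module R M), IsSimpleModule R M ∧
      ∃ x : M, r • x ≠ 0 := by
  obtain ⟨I, hI, hrI⟩ : ∃ I : Ideal R, IsCoatom I ∧ r ∉ I := by
    simpa [Ring.jacobson, Module.jacobson, Submodule.mem_sInf] using hr
  refine ⟨R ⧸ I, inferInstance, inferInstance, isSimpleModule_iff_isCoatom.2 hI,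
    Submodule.Quotient.mk 1, ?_⟩
  rwa [← Submodule.Quotient.mk_smul, smul_eq_mul, mul_one, Ne, Submodule.Quotient.mk_eq_zero]

theorem exists_isIrreducible_apply_ne_one (k : Type u) [Field k] {G : Type v} [Group G] [Finite G]
    [NeZero (Nat.card G : k)] {g : G} (hg : g ≠ 1) :
    ∃ (V : Type (max u v)) (_ : AddCommGroup V) (_ : Module k V) (_ : FiniteDimensional k V)
      (ρ : Representation k G V), IsIrreducible ρ ∧ ρ g ≠ 1 := by
  have hrad : MonoidAlgebra.of k G g - 1 ∉ Ring.jacobson k[G] := by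
    rwa [IsSemisimpleRing.jacobson_eq_bot, Submodule.mem_bot, sub_eq_zero,
      ← map_one (MonoidAlgebra.of k G), MonoidAlgebra.of_injective.eq_iff]
  obtain ⟨M, _, _, hM, x, hx⟩ := exists_isSimpleModule_smul_ne_zero_of_notMem_jacobson hrad
  have hfin : Module.Finite k (RestrictScalars k k[G] M) :=
    let _ : Module k[G] (RestrictScalars k k[G] M) := RestrictScalars.moduleOrig ..
    have : Module.Finite k[G] (RestrictScalars k k[G] M) := inferInstanceAs (Module.Finite k[G] M)
    Module.Finite.trans k[G] _
  have hne : Representation.ofModule M g ≠ 1 := fun h ↦ hx <| by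
    have happly := LinearMap.congr_fun h ((RestrictScalars.addEquiv k k[G] M).symm x)
    rw [sub_smul, one_smul, sub_eq_zero]
    simpa using! happly
  exact ⟨RestrictScalars k k[G] M, inferInstance, RestrictScalars.module k k[G] M, hfin, _,
    (Representation.isSimpleModule_iff_irreducible_ofModule ..).1 hM, hne⟩

theorem map_sq_eq_one_of_character_im_eq_zero {G V : Type*} [Monoid G] [AddCommGroup V]
    [Module ℂ V] [FiniteDimensional ℂ V] (ρ : Representation ℂ G V) [IsIrreducible ρ] {z : G}
    (hz : z ∈ Submonoid.center G) (hfin : IsOfFinOrder z) (him : (ρ.character z).im = 0) :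
    ρ (z ^ 2) = 1 := by
  have := nontrivial_of_isIrreducible ρ
  obtain ⟨c, hc⟩ := exists_eq_smul_one_of_mem_center ρ hz
  obtain ⟨n, hn, hzn⟩ := isOfFinOrder_iff_pow_eq_one.1 hfin
  have hnorm : ‖c‖ = 1 := by
    have hcn : c ^ n • (1 : Module.End ℂ V) = 1 := by
      rw [← one_pow n, ← smul_pow, ← hc, ← map_pow, hzn, map_one, one_pow]
    refine Complex.norm_eq_one_of_pow_eq_one (n := n) ?_ hn.ne'
    exact smul_left_injective ℂ one_ne_zero (hcn.trans (one_smul ℂ 1).symm)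
  have hreal : conj c = c := by
    rw [Representation.character, hc, map_smul, LinearMap.trace_one, smul_eq_mul,
      ← Complex.ofReal_natCast, Complex.im_mul_ofReal] at him
    exact Complex.conj_eq_iff_im.2
      ((mul_eq_zero.1 him).resolve_right (mod_cast Module.finrank_pos.ne'))
  have hsq : c ^ 2 = 1 := by
    rw [sq]
    nth_rw 2 [← hreal]
    rw [Complex.mul_conj', hnorm, Complex.ofReal_one, one_pow]
  rw [map_pow, hc, smul_pow, hsq, one_smul, one_pow]

section CharacterValues

variable {G H : Type}

theorem cd_subset_one_of_isMulCommutative [Monoid G] [IsMulCommutative G] : cd G ⊆ {1} := by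
  rintro _ ⟨V, _, rfl⟩
  have := isIrreducible_of_simple V
  rw [FDRep.char_one, IsIrreducible.finrank_eq_one_of_isMulCommutative V.ρ, Nat.cast_one,
    Set.mem_singleton_iff]

theorem im_eq_zero_of_mem_cd [Monoid G] {x : ℂ} (hx : x ∈ cd G) : x.im = 0 := by
  obtain ⟨V, -, rfl⟩ := hx
  rw [FDRep.char_one, Complex.natCast_im]

theorem character_mem_cv [Monoid G] {V : Type} [AddCommGroup V] [Module ℂ V]
    [FiniteDimensional ℂ V] (ρ : Representation ℂ G V) [hρ : IsIrreducible ρ] (g : G) :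
    ρ.character g ∈ cv G :=
  have : IsIrreducible (FDRep.of ρ).ρ := hρ
  ⟨FDRep.of ρ, simple_of_isIrreducible _, g, rfl⟩

theorem cv_subset_cv_of_surjective [Monoid G] [Monoid H] {p : G →* H}
    (hp : Function.Surjective p) : cv H ⊆ cv G := by
  rintro _ ⟨V, _, h, rfl⟩
  obtain ⟨g, rfl⟩ := hp h
  have := isIrreducible_of_simple V
  have := isIrreducible_comp_of_surjective V.ρ hp
  exact character_mem_cv (V.ρ.comp p) g

theorem sq_eq_one_of_mem_center [Group G] [Finite G] (hreal : ∀ x ∈ cv G, x.im = 0) {z : G}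
    (hz : z ∈ Subgroup.center G) : z ^ 2 = 1 := by
  by_contra hne
  obtain ⟨V, _, _, _, ρ, _, hρ⟩ := exists_isIrreducible_apply_ne_one ℂ hne
  exact hρ (map_sq_eq_one_of_character_im_eq_zero ρ hz (isOfFinOrder_of_finite z)
    (hreal _ (character_mem_cv ρ z)))

end CharacterValues

section Extraspecial

/-- Extraspecial `p`-groups. The remaining clause `Φ(E) = Z(E)` of the usual definition is implied:
`Z(E) = E' ≤ Φ(E)`, and `⁅x ^ p, y⁆ = ⁅x, y⁆ ^ p = 1` makes `E ⧸ Z(E)` elementary abelian. -/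
def IsExtraspecial (p : ℕ) (E : Type*) [Group E] : Prop :=
  IsPGroup p E ∧ Subgroup.center E = commutator E ∧ Nat.card (Subgroup.center E) = p

variable {G : Type*} [Group G] [Finite G]

theorem exists_normal_forall_commutator_quotient_le (hG : ¬ IsMulCommutative G) :
    ∃ (N : Subgroup G) (_ : N.Normal), ¬ IsMulCommutative (G ⧸ N) ∧
      ∀ K : Subgroup (G ⧸ N), K.Normal → K ≠ ⊥ → commutator (G ⧸ N) ≤ K := by
  have hbot : (⊥ : Subgroup G) ∈ {N : Subgroup G | N.Normal ∧ ¬ commutator G ≤ N} :=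
    ⟨inferInstance, fun h ↦ hG ((commutator_eq_bot_iff G).1 (le_bot_iff.1 h))⟩
  obtain ⟨N, ⟨hN, hGN⟩, hmax⟩ := (Set.toFinite _).exists_maximal ⟨⊥, hbot⟩
  refine ⟨N, hN, mt Subgroup.Normal.quotient_commutative_iff_commutator_le.1 hGN,
    fun K hK hKbot ↦ ?_⟩
  have hmap : (commutator G).map (QuotientGroup.mk' N) = commutator (G ⧸ N) := by
    rw [map_commutator_eq, QuotientGroup.range_mk', commutator_def]
  rw [← hmap, Subgroup.map_le_iff_le_comap]
  by_contra hle
  have hKN : K.comap (QuotientGroup.mk' N) ≤ N :=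
    hmax ⟨inferInstance, hle⟩ (QuotientGroup.le_comap_mk' N K)
  refine hKbot (eq_bot_iff.2 fun x hx ↦ ?_)
  obtain ⟨g, rfl⟩ := QuotientGroup.mk'_surjective N x
  exact (QuotientGroup.eq_one_iff g).2 (hKN hx)

theorem normal_zpowers_of_mem_center {G : Type*} [Group G] {z : G} (hz : z ∈ Subgroup.center G) :
    (Subgroup.zpowers z).Normal where
  conj_mem x hx g := by
    rwa [Subgroup.mem_center_iff.1 (Subgroup.zpowers_le.2 hz hx) g, mul_inv_cancel_right]

theorem isExtraspecial_of_forall_commutator_le {p : ℕ} [Fact p.Prime] (hG : IsPGroup p G)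
    (hcomm : ¬ IsMulCommutative G) (hexp : ∀ z ∈ Subgroup.center G, z ^ p = 1)
    (hmin : ∀ K : Subgroup G, K.Normal → K ≠ ⊥ → commutator G ≤ K) : IsExtraspecial p G := by
  have hcard : ∀ z ∈ Subgroup.center G, z ≠ 1 → Nat.card (Subgroup.zpowers z) = p :=
    fun z hz hz1 ↦ (Nat.card_zpowers z).trans (orderOf_eq_prime (hexp z hz) hz1)
  have hzpowers : ∀ z ∈ Subgroup.center G, z ≠ 1 → commutator G = Subgroup.zpowers z := by
    intro z hz hz1
    have hle : commutator G ≤ Subgroup.zpowers z :=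
      hmin _ (normal_zpowers_of_mem_center hz) (Subgroup.zpowers_ne_bot.2 hz1)
    have hdvd := (Subgroup.card_dvd_of_le hle).trans (hcard z hz hz1).dvd
    obtain hone | hp := (Nat.dvd_prime Fact.out).1 hdvd
    · exact absurd ((commutator_eq_bot_iff G).1 (Subgroup.card_eq_one.1 hone)) hcomm
    · exact Subgroup.eq_of_le_of_card_ge hle ((hcard z hz hz1).trans hp.symm).le
  have : Nontrivial G := not_subsingleton_iff_nontrivial.1 fun _ ↦ hcomm inferInstance
  have := hG.center_nontrivial
  obtain ⟨z, hz, hz1⟩ := (Subgroup.nontrivial_iff_exists_ne_one _).1 this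
  have hcenter : Subgroup.center G = commutator G := by
    refine le_antisymm (fun y hy ↦ ?_) (hzpowers z hz hz1 ▸ Subgroup.zpowers_le.2 hz)
    obtain rfl | hy1 := eq_or_ne y 1
    · exact one_mem _
    · exact hzpowers y hy hy1 ▸ Subgroup.mem_zpowers y
  exact ⟨hG, hcenter, by rw [hcenter, hzpowers z hz hz1, hcard z hz hz1]⟩

end Extraspecial

theorem extraspecial_quotient_of_two_group_general (G : Type) [Group G] [Finite G]
    (hG : IsPGroup 2 G) (hcomm : ¬ IsMulCommutative G) (hreal : ∀ x ∈ cv G, x.im = 0) :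
    ∃ (N : Subgroup G) (_ : N.Normal), IsExtraspecial 2 (G ⧸ N) := by
  obtain ⟨N, hN, hquot, hmin⟩ := exists_normal_forall_commutator_quotient_le hcomm
  have hrealN : ∀ x ∈ cv (G ⧸ N), x.im = 0 := fun x hx ↦
    hreal x (cv_subset_cv_of_surjective (QuotientGroup.mk'_surjective N) hx)
  exact ⟨N, hN, isExtraspecial_of_forall_commutator_le (hG.to_quotient N) hquot
    (fun z hz ↦ sq_eq_one_of_mem_center hrealN hz) hmin⟩

theorem extraspecial_quotient_of_two_group (G : Type) [Group G] [Fintype G]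
    (hG : IsPGroup 2 G) (m : ℂ) (hm : m ≠ 1)
    (hcd : cd G = {1, m}) (hcv : cv G = {1, m, -1, -m, 0})
    (hchi : ∀ V : FDRep ℂ G, Simple V → V.character 1 ≠ 1 →
      (Set.range V.character).ncard ≤ 3) :
    ∃ (N : Subgroup G) (hN : N.Normal),
      letI : N.Normal := hN
      IsPGroup 2 (G ⧸ N) ∧
      Subgroup.center (G ⧸ N) = commutator (G ⧸ N) ∧
      Nat.card (Subgroup.center (G ⧸ N)) = 2 := by
  have hmem : m ∈ cd G := by simp [hcd]
  refine extraspecial_quotient_of_two_group_general G hG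
    (fun _ ↦ hm (cd_subset_one_of_isMulCommutative hmem)) ?_
  simp [hcv, im_eq_zero_of_mem_cd hmem]
end
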